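/- arXiv:2403.20198 — 4 statements merged into one kernel-verified Lean document; each statement's English description precedes it below -/
import Mathlib

section
/- Fix K ≥ 1 devices and real constants a_k ∈ ℝ, b_k > 0, c_k > 0, d_k ≥ 0 for k = 1, …, K, a total edge compute budget F > 0, and a delay bound T ∈ ℝ. Then the feasible region of problem P4, namely the set of tuples (τ_1, …, τ_K, g_1, …, g_K, f_1, …, f_K) ∈ ℝ^{3K} satisfying τ_k > 0, f_k > 0, g_k ≥ d_k, a_k + b_k·e^{g_k}/τ_k + c_k/f_k ≤ T for each k, and Σ_k f_k ≤ F, is a convex subset of ℝ^{3K}. -/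
open Real Finset

/-!
On the region where `τ > 0`, the function `exp g / τ = exp (g - log τ)` is convex in `(g, τ)`,
because `log` is concave and `exp` is convex and increasing; taking `g = 0` gives convexity of
`1 / f`. Hence every delay constraint cuts out a sublevel set of a convex function, and all other
constraints are half-spaces.
-/

section Composition

variable {𝕜 E α β : Type*} [Semiring 𝕜] [PartialOrder 𝕜] [AddCommMonoid E] [SMul 𝕜 E]
  [AddCommMonoid α] [PartialOrder α] [SMul 𝕜 α] [AddCommMonoid β] [PartialOrder β] [SMul 𝕜 β]
  {s : Set E} {t : Set β} {f : E → β} {φ : β → α}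

theorem convexOn_comp_of_mapsTo (hφ : ConvexOn 𝕜 t φ) (hf : ConvexOn 𝕜 s f)
    (hφ_mono : MonotoneOn φ t) (hst : Set.MapsTo f s t) : ConvexOn 𝕜 s fun x ↦ φ (f x) := by
  refine ⟨hf.1, fun x hx y hy u v hu hv huv ↦ ?_⟩
  calc φ (f (u • x + v • y))
      ≤ φ (u • f x + v • f y) :=
        hφ_mono (hst (hf.1 hx hy hu hv huv)) (hφ.1 (hst hx) (hst hy) hu hv huv)
          (hf.2 hx hy hu hv huv)
    _ ≤ u • φ (f x) + v • φ (f y) := hφ.2 (hst hx) (hst hy) hu hv huv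

theorem concaveOn_comp_of_mapsTo (hφ : ConcaveOn 𝕜 t φ) (hf : ConcaveOn 𝕜 s f)
    (hφ_mono : MonotoneOn φ t) (hst : Set.MapsTo f s t) : ConcaveOn 𝕜 s fun x ↦ φ (f x) :=
  convexOn_comp_of_mapsTo (α := αᵒᵈ) (β := βᵒᵈ) hφ.dual hf.dual hφ_mono.dual hst

end Composition

section Latency

variable {E : Type*} [AddCommMonoid E] [Module ℝ E] {s : Set E} {τ g f : E → ℝ} {b c : ℝ}

theorem concaveOn_log_comp (hτ : ConcaveOn ℝ s τ) (hτ_pos : ∀ x ∈ s, 0 < τ x) :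
    ConcaveOn ℝ s fun x ↦ log (τ x) :=
  concaveOn_comp_of_mapsTo strictConcaveOn_log_Ioi.concaveOn hτ strictMonoOn_log.monotoneOn hτ_pos

theorem convexOn_exp_comp (hg : ConvexOn ℝ s g) : ConvexOn ℝ s fun x ↦ exp (g x) :=
  convexOn_comp_of_mapsTo convexOn_exp hg (exp_monotone.monotoneOn _) (Set.mapsTo_univ _ _)

theorem convexOn_exp_div (hg : ConvexOn ℝ s g) (hτ : ConcaveOn ℝ s τ)
    (hτ_pos : ∀ x ∈ s, 0 < τ x) : ConvexOn ℝ s fun x ↦ exp (g x) / τ x := by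
  have exp_sub_log : ∀ x ∈ s, exp (g x - log (τ x)) = exp (g x) / τ x := fun x hx ↦ by
    rw [exp_sub, exp_log (hτ_pos x hx)]
  exact (convexOn_exp_comp (hg.sub (concaveOn_log_comp hτ hτ_pos))).congr exp_sub_log

theorem convexOn_inv_of_concaveOn (hf : ConcaveOn ℝ s f) (hf_pos : ∀ x ∈ s, 0 < f x) :
    ConvexOn ℝ s fun x ↦ (f x)⁻¹ := by
  simpa only [exp_zero, one_div] using convexOn_exp_div (convexOn_const 0 hf.1) hf hf_pos

theorem convexOn_latency (a : ℝ) (hb : 0 ≤ b) (hc : 0 ≤ c) (hg : ConvexOn ℝ s g)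
    (hτ : ConcaveOn ℝ s τ) (hτ_pos : ∀ x ∈ s, 0 < τ x)
    (hf : ConcaveOn ℝ s f) (hf_pos : ∀ x ∈ s, 0 < f x) :
    ConvexOn ℝ s fun x ↦ a + b * exp (g x) / τ x + c / f x := by
  have transmission : ConvexOn ℝ s fun x ↦ b * exp (g x) / τ x := by
    simpa only [smul_eq_mul, mul_div_assoc] using (convexOn_exp_div hg hτ hτ_pos).smul hb
  have decoding : ConvexOn ℝ s fun x ↦ c / f x := by
    simpa only [smul_eq_mul, div_eq_mul_inv] using (convexOn_inv_of_concaveOn hf hf_pos).smul hc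
  exact ((convexOn_const a hg.1).add transmission).add decoding

theorem convex_device_constraints (τ g f : E →ₗ[ℝ] ℝ) (a d T : ℝ) (hb : 0 ≤ b) (hc : 0 ≤ c) :
    Convex ℝ {x | 0 < τ x ∧ 0 < f x ∧ d ≤ g x ∧ a + b * exp (g x) / τ x + c / f x ≤ T} := by
  have convex_domain : Convex ℝ {x | 0 < τ x ∧ 0 < f x ∧ d ≤ g x} :=
    (convex_halfSpace_gt τ.isLinear 0).inter
      ((convex_halfSpace_gt f.isLinear 0).inter (convex_halfSpace_ge g.isLinear d))
  have latency := convexOn_latency a hb hc (g.convexOn convex_domain)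
    (τ.concaveOn convex_domain) (fun _ hx ↦ hx.1) (f.concaveOn convex_domain) (fun _ hx ↦ hx.2.1)
  simpa only [Set.mem_ofPred_eq, and_assoc] using latency.convex_le T

end Latency

theorem feasible_region_convex_general {ι : Type*} [Fintype ι] (a : ι → ℝ) {b c : ι → ℝ}
    (d : ι → ℝ) (hb : ∀ k, 0 ≤ b k) (hc : ∀ k, 0 ≤ c k) (F T : ℝ) :
    Convex ℝ {p : (ι → ℝ) × (ι → ℝ) × (ι → ℝ) |
      (∀ k, 0 < p.1 k) ∧ (∀ k, 0 < p.2.2 k) ∧ (∀ k, d k ≤ p.2.1 k) ∧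
      (∀ k, a k + b k * exp (p.2.1 k) / p.1 k + c k / p.2.2 k ≤ T) ∧
      ∑ k, p.2.2 k ≤ F} := by
  let τ (k : ι) : (ι → ℝ) × (ι → ℝ) × (ι → ℝ) →ₗ[ℝ] ℝ := .proj k ∘ₗ .fst ℝ _ _
  let g (k : ι) : (ι → ℝ) × (ι → ℝ) × (ι → ℝ) →ₗ[ℝ] ℝ := .proj k ∘ₗ .fst ℝ _ _ ∘ₗ .snd ℝ _ _
  let f (k : ι) : (ι → ℝ) × (ι → ℝ) × (ι → ℝ) →ₗ[ℝ] ℝ := .proj k ∘ₗ .snd ℝ _ _ ∘ₗ .snd ℝ _ _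
  have devices : Convex ℝ (⋂ k, {p | 0 < τ k p ∧ 0 < f k p ∧ d k ≤ g k p ∧
      a k + b k * exp (g k p) / τ k p + c k / f k p ≤ T}) :=
    convex_iInter fun k ↦
      convex_device_constraints (τ k) (g k) (f k) (a k) (d k) T (hb k) (hc k)
  have budget : Convex ℝ {p | (∑ k, f k) p ≤ F} := convex_halfSpace_le (∑ k, f k).isLinear F
  convert devices.inter budget using 1
  ext p
  simp [τ, g, f, forall_and, and_assoc]

/-- The feasible region of problem P4 — tuples `(τ, g, f) ∈ (ℝ^K)³` with
`τ_k > 0`, `f_k > 0`, `g_k ≥ d_k`, `a_k + b_k·e^{g_k}/τ_k + c_k/f_k ≤ T` for each `k`,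
and `Σ_k f_k ≤ F` — is a convex set. -/
theorem feasible_region_convex (K : ℕ) (hK : 1 ≤ K)
    (a : Fin K → ℝ) (b c d : Fin K → ℝ)
    (hb : ∀ k, 0 < b k) (hc : ∀ k, 0 < c k) (hd : ∀ k, 0 ≤ d k)
    (F : ℝ) (hF : 0 < F) (T : ℝ) :
    Convex ℝ {p : (Fin K → ℝ) × (Fin K → ℝ) × (Fin K → ℝ) |
      (∀ k, 0 < p.1 k) ∧ (∀ k, 0 < p.2.2 k) ∧ (∀ k, d k ≤ p.2.1 k) ∧
      (∀ k, a k + b k * exp (p.2.1 k) / p.1 k + c k / p.2.2 k ≤ T) ∧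
      ∑ k, p.2.2 k ≤ F} :=
  feasible_region_convex_general a d (fun k ↦ (hb k).le) (fun k ↦ (hc k).le) F T
end

section
/- Fix K ≥ 1 devices and constants a_k ∈ ℝ, b_k > 0, c_k > 0, d_k ≥ 0, F > 0, T ∈ ℝ. Suppose (τ_1, …, τ_K, g_1, …, g_K, f_1, …, f_K) is feasible for problem P3, i.e., τ_k > 0, f_k > 0, g_k ≥ d_k, a_k + b_k·e^{g_k}/τ_k + c_k/f_k ≤ T for every k, and Σ_k f_k ≤ F. If for some index k₀ the delay constraint is strict, i.e., a_{k₀} + b_{k₀}·e^{g_{k₀}}/τ_{k₀} + c_{k₀}/f_{k₀} < T, then there exists another feasible point (with the same g_k's) whose objective value Σ_k τ_k is strictly smaller. In particular, every optimal solution of P3 satisfies all delay constraints with equality. -/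
open Real Finset

/-- Feasibility for problem P3 with fixed compression ratios: `τ_k > 0`, `f_k > 0`,
`g_k ≥ d_k`, `a_k + b_k·e^{g_k}/τ_k + c_k/f_k ≤ T` for every `k`, and `Σ_k f_k ≤ F`. -/
def FeasP3 (K : ℕ) (a b c d : Fin K → ℝ) (F T : ℝ)
    (τ g f : Fin K → ℝ) : Prop :=
  (∀ k, 0 < τ k) ∧ (∀ k, 0 < f k) ∧ (∀ k, d k ≤ g k) ∧
  (∀ k, a k + b k * exp (g k) / τ k + c k / f k ≤ T) ∧ (∑ k, f k ≤ F)

theorem exists_mem_Ioo_lt_of_continuousWithinAt {α β : Type*}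
    [LinearOrder α] [TopologicalSpace α] [OrderTopology α] [DenselyOrdered α]
    [LinearOrder β] [TopologicalSpace β] [ClosedIciTopology β]
    {φ : α → β} {l x : α} {y : β} (hφ : ContinuousWithinAt φ (Set.Iio x) x)
    (hl : l < x) (hy : φ x < y) : ∃ x' ∈ Set.Ioo l x, φ x' < y := by
  have : (nhdsWithin x (Set.Iio x)).NeBot := nhdsLT_neBot_of_exists_lt ⟨l, hl⟩
  have near_lt : ∀ᶠ x' in nhdsWithin x (Set.Iio x), φ x' < y := hφ.eventually_lt_const hy
  have near_mem : ∀ᶠ x' in nhdsWithin x (Set.Iio x), x' ∈ Set.Ioo l x := Ioo_mem_nhdsLT hl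
  exact (near_mem.and near_lt).exists

namespace FeasP3

variable {K : ℕ} {a b c d : Fin K → ℝ} {F T : ℝ} {τ g f : Fin K → ℝ}

theorem update_slot (h : FeasP3 K a b c d F T τ g f) {k₀ : Fin K} {t : ℝ} (ht : 0 < t)
    (hdelay : a k₀ + b k₀ * exp (g k₀) / t + c k₀ / f k₀ ≤ T) :
    FeasP3 K a b c d F T (Function.update τ k₀ t) g f := by
  obtain ⟨hτ, hf, hg, hT, hF⟩ := h
  refine ⟨?_, hf, hg, ?_, hF⟩
  · exact (Function.forall_update_iff τ fun _ s => 0 < s).2 ⟨ht, fun k _ => hτ k⟩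
  · exact (Function.forall_update_iff τ
      fun k s => a k + b k * exp (g k) / s + c k / f k ≤ T).2 ⟨hdelay, fun k _ => hT k⟩

theorem exists_sum_lt_of_delay_lt (h : FeasP3 K a b c d F T τ g f) {k₀ : Fin K}
    (hlt : a k₀ + b k₀ * exp (g k₀) / τ k₀ + c k₀ / f k₀ < T) :
    ∃ τ' : Fin K → ℝ, FeasP3 K a b c d F T τ' g f ∧ ∑ k, τ' k < ∑ k, τ k := by
  have hτ : 0 < τ k₀ := h.1 k₀
  have delay_continuousAt :
      ContinuousAt (fun t => a k₀ + b k₀ * exp (g k₀) / t + c k₀ / f k₀) (τ k₀) := by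
    fun_prop (disch := exact hτ.ne')
  obtain ⟨t, ⟨t_pos, t_lt⟩, delay_lt⟩ :=
    exists_mem_Ioo_lt_of_continuousWithinAt delay_continuousAt.continuousWithinAt hτ hlt
  exact ⟨Function.update τ k₀ t, h.update_slot t_pos delay_lt.le,
    Fintype.sum_strictMono (update_lt_self_iff.2 t_lt)⟩

theorem delay_eq_of_forall_sum_le (h : FeasP3 K a b c d F T τ g f)
    (hopt : ∀ τ' : Fin K → ℝ, FeasP3 K a b c d F T τ' g f → ∑ k, τ k ≤ ∑ k, τ' k) (k : Fin K) :
    a k + b k * exp (g k) / τ k + c k / f k = T := by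
  have delay_le : a k + b k * exp (g k) / τ k + c k / f k ≤ T := h.2.2.2.1 k
  refine delay_le.eq_of_not_lt fun hlt => ?_
  obtain ⟨τ', feas', sum_lt⟩ := h.exists_sum_lt_of_delay_lt hlt
  exact sum_lt.not_ge (hopt τ' feas')

end FeasP3

theorem p3_delay_constraints_active_general (K : ℕ) (a b c d : Fin K → ℝ) (F T : ℝ) :
    (∀ τ g f : Fin K → ℝ, FeasP3 K a b c d F T τ g f →
      ∀ k₀ : Fin K, a k₀ + b k₀ * exp (g k₀) / τ k₀ + c k₀ / f k₀ < T →
        ∃ τ' : Fin K → ℝ, FeasP3 K a b c d F T τ' g f ∧ ∑ k, τ' k < ∑ k, τ k) ∧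
    (∀ τ g f : Fin K → ℝ, FeasP3 K a b c d F T τ g f →
      (∀ τ' : Fin K → ℝ, FeasP3 K a b c d F T τ' g f → ∑ k, τ k ≤ ∑ k, τ' k) →
      ∀ k, a k + b k * exp (g k) / τ k + c k / f k = T) :=
  ⟨fun _ _ _ h _ => h.exists_sum_lt_of_delay_lt, fun _ _ _ h => h.delay_eq_of_forall_sum_le⟩

/-- Lemma 2: if a feasible point of P3 has a strict delay constraint at some device `k₀`,
then there is another feasible point (with the same `g_k`'s) with strictly smaller
objective `Σ_k τ_k`; in particular every optimal solution of P3 satisfies all delay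
constraints with equality. -/
theorem p3_delay_constraints_active (K : ℕ) (hK : 1 ≤ K)
    (a b c d : Fin K → ℝ) (hb : ∀ k, 0 < b k) (hc : ∀ k, 0 < c k) (hd : ∀ k, 0 ≤ d k)
    (F : ℝ) (hF : 0 < F) (T : ℝ) :
    (∀ τ g f : Fin K → ℝ, FeasP3 K a b c d F T τ g f →
      ∀ k₀ : Fin K, a k₀ + b k₀ * exp (g k₀) / τ k₀ + c k₀ / f k₀ < T →
        ∃ τ' f' : Fin K → ℝ, FeasP3 K a b c d F T τ' g f' ∧
          ∑ k, τ' k < ∑ k, τ k) ∧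
    (∀ τ g f : Fin K → ℝ, FeasP3 K a b c d F T τ g f →
      (∀ τ' g' f' : Fin K → ℝ, FeasP3 K a b c d F T τ' g' f' →
        ∑ k, τ k ≤ ∑ k, τ' k) →
      ∀ k, a k + b k * exp (g k) / τ k + c k / f k = T) := by
  obtain ⟨improve, active⟩ := p3_delay_constraints_active_general K a b c d F T
  exact ⟨fun τ g f h k₀ hlt => (improve τ g f h k₀ hlt).imp fun _ h' => ⟨f, h'⟩,
    fun τ g f h hopt => active τ g f h fun τ' => hopt τ' g f⟩
end

section
/- Let L > 0, D₀ > 0, o > 0, T_s > 0, C^d > 0, M > 0, μ > 0, g ∈ ℝ, a ∈ ℝ, and T > a. Define f* = (L/(T − a))·(√(D₀·o·e^g·T_s·C^d/(M·μ)) + C^d) and τ* = (L/(T − a))·(D₀·o·e^g·T_s/M + √(μ·D₀·o·e^g·T_s·C^d/M)). Then a + (L·D₀·o·e^g·T_s)/(M·τ*) + L·C^d/f* = T; that is, the end-to-end delay constraint holds with equality at the claimed optimal point. -/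
open Real

/-!
Let `w = D₀ o e^g T_s / M` be the airtime of one image over the full band. At the claimed point,
transmission and decoding take the fractions `w / (w + √(w y))` and `y / (y + √(w y))` of the
available time `T - a`, where `y = μ C^d`. Cancelling `√w` and `√y` respectively turns these into
`√w / (√w + √y)` and `√y / (√y + √w)`, which sum to one.
-/

theorem div_add_sqrt_mul {x : ℝ} (hx : 0 < x) (y : ℝ) :
    x / (x + √(x * y)) = √x / (√x + √y) := by
  have sqrt_ne_zero : √x ≠ 0 := (sqrt_pos.mpr hx).ne'
  calc x / (x + √(x * y)) = √x * √x / (√x * (√x + √y)) := by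
        rw [sqrt_mul hx.le, mul_add, mul_self_sqrt hx.le]
    _ = √x / (√x + √y) := mul_div_mul_left _ _ sqrt_ne_zero

theorem div_add_sqrt_mul_add_div_add_sqrt_mul {x y : ℝ} (hx : 0 < x) (hy : 0 < y) :
    x / (x + √(x * y)) + y / (y + √(x * y)) = 1 := by
  have sum_pos : 0 < √x + √y := add_pos (sqrt_pos.mpr hx) (sqrt_pos.mpr hy)
  calc x / (x + √(x * y)) + y / (y + √(x * y))
      = √x / (√x + √y) + √y / (√x + √y) := by
        rw [div_add_sqrt_mul hx, mul_comm x y, div_add_sqrt_mul hy, add_comm √y]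
    _ = 1 := by rw [← add_div, div_self sum_pos.ne']

theorem mul_sqrt_div {c : ℝ} (hc : 0 ≤ c) (z : ℝ) : c * √(z / c) = √(z * c) := by
  rw [sqrt_div' z hc, sqrt_mul' z hc, mul_div_left_comm, div_sqrt]

theorem div_sqrt_div_add {μ : ℝ} (hμ : 0 < μ) (w c : ℝ) :
    c / (√(w * c / μ) + c) = μ * c / (μ * c + √(w * (μ * c))) := by
  rw [← mul_div_mul_left c _ hμ.ne', mul_add, mul_sqrt_div hμ.le, add_comm, mul_assoc w,
    mul_comm c μ]

theorem mul_div_div_mul {G₀ : Type*} [CommGroupWithZero G₀] {l : G₀} (hl : l ≠ 0) (x d s : G₀) :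
    l * x / (l / d * s) = d * (x / s) := by
  rw [div_mul_eq_mul_div, div_div_eq_mul_div, mul_assoc, mul_div_mul_left _ _ hl, mul_comm x,
    mul_div_assoc]

theorem transmission_add_decoding_latency_eq {L w C μ : ℝ} (hL : L ≠ 0) (hw : 0 < w) (hC : 0 < C)
    (hμ : 0 < μ) (d : ℝ) :
    L * w / (L / d * (w + √(w * (μ * C)))) + L * C / (L / d * (√(w * C / μ) + C)) = d := by
  rw [mul_div_div_mul hL, mul_div_div_mul hL, div_sqrt_div_add hμ, ← mul_add,
    div_add_sqrt_mul_add_div_add_sqrt_mul hw (mul_pos hμ hC), mul_one]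

/-- The closed-form optimal point of Theorem 3 satisfies the end-to-end delay
constraint with equality:
`a + (L·D₀·o·e^g·T_s)/(M·τ*) + L·C^d/f* = T`. -/
theorem optimal_point_delay_equality (L D₀ o Ts Cd M μ : ℝ) (g a T : ℝ)
    (hL : 0 < L) (hD₀ : 0 < D₀) (ho : 0 < o) (hTs : 0 < Ts) (hCd : 0 < Cd)
    (hM : 0 < M) (hμ : 0 < μ) (hT : a < T) :
    a + L * D₀ * o * exp g * Ts /
        (M * (L / (T - a) * (D₀ * o * exp g * Ts / M +
          Real.sqrt (μ * D₀ * o * exp g * Ts * Cd / M)))) +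
      L * Cd / (L / (T - a) * (Real.sqrt (D₀ * o * exp g * Ts * Cd / (M * μ)) + Cd))
      = T := by
  set w := D₀ * o * exp g * Ts / M with w_def
  have w_pos : 0 < w := by positivity
  have numerator_eq : L * D₀ * o * exp g * Ts / M = L * w := by rw [w_def]; ring
  have slot_radicand : μ * D₀ * o * exp g * Ts * Cd / M = w * (μ * Cd) := by rw [w_def]; ring
  have frequency_radicand : D₀ * o * exp g * Ts * Cd / (M * μ) = w * Cd / μ := by
    rw [w_def]; ring
  rw [← div_div, numerator_eq, slot_radicand, frequency_radicand, add_assoc,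
    transmission_add_decoding_latency_eq hL.ne' w_pos hCd hμ, add_sub_cancel]
end

section
/- Let L > 0, D₀ > 0, o > 0, T_s > 0, C^d > 0, M > 0, μ > 0, g ∈ ℝ, a ∈ ℝ, T > a, and define τ* = (L/(T − a))·(D₀·o·e^g·T_s/M + √(μ·D₀·o·e^g·T_s·C^d/M)) and f* = (L/(T − a))·(√(D₀·o·e^g·T_s·C^d/(M·μ)) + C^d). Set λ = M·(τ*)²/(L·D₀·o·T_s·e^g). Then λ > 0 and the two KKT stationarity conditions hold: 1 − λ·(L·D₀·o·T_s/M)·e^g/(τ*)² = 0 and −λ·L·C^d/(f*)² + μ = 0. -/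
open Real

/-!
Write `A = D₀ o e^g T_s / M` and `C = C^d`. The closed forms for `τ*` and `f*` share a factor,
`A + √(μAC) = √A (√A + √(μC))` and `√(AC/μ) + C = √(C/μ) (√A + √(μC))`,
so `(τ* / f*)² = μA / C`. The multiplier `τ*² / (LA)` is chosen to solve the stationarity condition
in `τ`, and this ratio makes it solve the condition in `f` as well.
-/

section Proportionality

variable {A C μ : ℝ}

theorem add_sqrt_eq_sqrt_mul_sqrt_add_sqrt (hA : 0 ≤ A) :
    A + √(μ * A * C) = √A * (√A + √(μ * C)) := by
  rw [mul_add, mul_self_sqrt hA, ← sqrt_mul hA, mul_left_comm, ← mul_assoc]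

theorem sqrt_add_eq_sqrt_mul_sqrt_add_sqrt (hC : 0 ≤ C) (hμ : 0 < μ) :
    √(A * C / μ) + C = √(C / μ) * (√A + √(μ * C)) := by
  have sqrt_mul_sqrt_A : √(C / μ) * √A = √(A * C / μ) := by
    rw [← sqrt_mul (by positivity), mul_comm, mul_div_assoc]
  have sqrt_mul_sqrt_μC : √(C / μ) * √(μ * C) = C := by
    rw [← sqrt_mul (by positivity), div_mul_eq_mul_div, mul_left_comm,
      mul_div_cancel_left₀ _ hμ.ne', sqrt_mul_self hC]
  rw [mul_add, sqrt_mul_sqrt_A, sqrt_mul_sqrt_μC]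

theorem sq_mul_add_sqrt_div_sq_mul_sqrt_add {c : ℝ} (hc : c ≠ 0)
    (hA : 0 ≤ A) (hC : 0 < C) (hμ : 0 < μ) :
    (c * (A + √(μ * A * C))) ^ 2 / (c * (√(A * C / μ) + C)) ^ 2 = μ * A / C := by
  have common_ne_zero : √A + √(μ * C) ≠ 0 := by positivity
  rw [add_sqrt_eq_sqrt_mul_sqrt_add_sqrt hA,
    sqrt_add_eq_sqrt_mul_sqrt_add_sqrt hC.le hμ, ← div_pow, mul_div_mul_left _ _ hc,
    mul_div_mul_right _ _ common_ne_zero, div_pow, sq_sqrt hA, sq_sqrt (by positivity)]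
  field_simp

end Proportionality

theorem kkt_stationarity_general {L A C μ d : ℝ}
    (hL : 0 < L) (hA : 0 < A) (hC : 0 < C) (hμ : 0 < μ) (hd : d ≠ 0) :
    let τ := L / d * (A + √(μ * A * C))
    let f := L / d * (√(A * C / μ) + C)
    let lam := τ ^ 2 / (L * A)
    0 < lam ∧ 1 - lam * (L * A) / τ ^ 2 = 0 ∧ -(lam * L * C / f ^ 2) + μ = 0 := by
  intro τ f lam
  have hc : L / d ≠ 0 := div_ne_zero hL.ne' hd
  have hτ : τ ≠ 0 := mul_ne_zero hc (by positivity)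
  have ratio : τ ^ 2 / f ^ 2 = μ * A / C := sq_mul_add_sqrt_div_sq_mul_sqrt_add hc hA.le hC hμ
  refine ⟨by positivity, ?_, ?_⟩
  · rw [div_mul_cancel₀ _ (by positivity), div_self (pow_ne_zero 2 hτ), sub_self]
  · have compute_price : lam * L * C / f ^ 2 = μ := calc
      lam * L * C / f ^ 2 = τ ^ 2 / f ^ 2 * (C / A) := by
        simp only [lam]
        field_simp
      _ = μ * A / C * (C / A) := by rw [ratio]
      _ = μ := by field_simp
    rw [compute_price, neg_add_cancel]

/-- The closed-form solution of Theorem 3 satisfies the KKT stationarity conditions of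
problem P4: with `λ = M·(τ*)²/(L·D₀·o·T_s·e^g)` one has `λ > 0`,
`1 − λ·(L·D₀·o·T_s/M)·e^g/(τ*)² = 0` and `−λ·L·C^d/(f*)² + μ = 0`. -/
theorem kkt_stationarity (L D₀ o Ts Cd M μ g a T : ℝ)
    (hL : 0 < L) (hD₀ : 0 < D₀) (ho : 0 < o) (hTs : 0 < Ts) (hCd : 0 < Cd)
    (hM : 0 < M) (hμ : 0 < μ) (hT : a < T) :
    let τs := L / (T - a) * (D₀ * o * exp g * Ts / M +
        Real.sqrt (μ * D₀ * o * exp g * Ts * Cd / M))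
    let fs := L / (T - a) * (Real.sqrt (D₀ * o * exp g * Ts * Cd / (M * μ)) + Cd)
    let lam := M * τs ^ 2 / (L * D₀ * o * Ts * exp g)
    0 < lam ∧
      1 - lam * (L * D₀ * o * Ts / M) * exp g / τs ^ 2 = 0 ∧
      -(lam * L * Cd / fs ^ 2) + μ = 0 := by
  convert kkt_stationarity_general (A := D₀ * o * exp g * Ts / M) hL (by positivity) hCd hμ
    (sub_ne_zero.2 hT.ne') using 1
  field_simp
end
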